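/- There exists a universal constant C > 0 such that for all integers k ≥ 1 and n ≥ 1 there is a polynomial ρ_n on ℝ^k of total degree at most C·n satisfying: C^{-1}·W_k(x) ≤ ρ_n(x) ≤ C·W_k(x) for all x with |x| ≤ 2a_n, and |∇ρ_n(x)| ≤ C·√n·W_k(x) for all x with |x| ≤ a_n, where W_k(x) = exp(−|x|²), a_n = √(n/2), and |∇ρ_n(x)| = (Σ_{j=1}^k (∂_j ρ_n(x))²)^{1/2}. -/

import Mathlib

open Real

/-- The Euclidean norm on `ℝ^k`. -/
noncomputable def euclNorm {k : ℕ} (x : Fin k → ℝ) : ℝ :=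
  Real.sqrt (∑ j, (x j) ^ 2)

/-- The Euclidean length of the gradient of a polynomial on `ℝ^k`. -/
noncomputable def gradNorm {k : ℕ} (P : MvPolynomial (Fin k) ℝ) (x : Fin k → ℝ) : ℝ :=
  Real.sqrt (∑ j, (MvPolynomial.eval x (MvPolynomial.pderiv j P)) ^ 2)

/-!
Compose the Taylor polynomial `T_m` of `exp` with `x ↦ -|x|²`. The remainder of `T_m` at `t` is at
most `2 |t|^m / m! ≤ 2 exp (e |t| - m)`, which is below `exp t / 2` as soon as `m ≥ 4 |t| + 2`: so a
degree linear in `n` makes `T_m (-|x|²)` comparable to `exp (-|x|²)` on balls of radius `O(√n)`.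
Since the derivative of `T_{m+1}` is `T_m`, the gradient of `T_{m+1} (-|x|²)` is
`-2 x T_m (-|x|²)`, of length `O(√n) exp (-|x|²)` there.
-/

section ExpTaylor

open Polynomial (derivative)
open scoped Polynomial

/-- The Taylor polynomial of `exp` at `0` with `m` terms, indexed by the number of terms
rather than by the degree `m - 1`; at `-|x|²` it approximates the Gaussian weight. -/
noncomputable def expTaylor (m : ℕ) : ℝ[X] :=
  PowerSeries.trunc m (PowerSeries.exp ℝ)

lemma eval_expTaylor (m : ℕ) (t : ℝ) :
    (expTaylor m).eval t = ∑ i ∈ Finset.range m, t ^ i / i.factorial := by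
  rw [expTaylor, ← Polynomial.eval₂_id, PowerSeries.eval₂_trunc_eq_sum_range]
  exact Finset.sum_congr rfl fun i _ => by simp [PowerSeries.coeff_exp, div_eq_inv_mul]

lemma derivative_expTaylor_succ (m : ℕ) : derivative (expTaylor (m + 1)) = expTaylor m := by
  rw [expTaylor, ← PowerSeries.trunc_derivative, PowerSeries.derivative_exp, expTaylor]

lemma natDegree_expTaylor_succ_le (m : ℕ) : (expTaylor (m + 1)).natDegree ≤ m :=
  Nat.le_of_lt_succ (PowerSeries.natDegree_trunc_lt _ m)

lemma pow_div_factorial_le_exp_mul_sub {t : ℝ} (ht : 0 ≤ t) (m : ℕ) :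
    t ^ m / m.factorial ≤ exp (exp 1 * t - m) := by
  have h : exp m * (t ^ m / m.factorial) ≤ exp (exp 1 * t) := by
    calc exp m * (t ^ m / m.factorial) = (exp 1 * t) ^ m / m.factorial := by
          rw [mul_pow, ← exp_nat_mul, mul_one, mul_div_assoc]
      _ ≤ exp (exp 1 * t) := pow_div_factorial_le_exp _ (by positivity) m
  rwa [exp_sub, le_div_iff₀' (exp_pos _)]

lemma abs_exp_sub_eval_expTaylor_le {t : ℝ} {m : ℕ} (h : 2 * |t| ≤ m + 1) :
    |exp t - (expTaylor m).eval t| ≤ 2 * exp (exp 1 * |t| - m) := by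
  have hratio : ‖(t : ℂ)‖ / m.succ ≤ 1 / 2 := by
    rw [Complex.norm_real, norm_eq_abs, div_le_iff₀ (by positivity), Nat.cast_succ]
    linarith
  have hremainder : |exp t - (expTaylor m).eval t| ≤ |t| ^ m / m.factorial * 2 := by
    rw [eval_expTaylor, ← norm_eq_abs, ← norm_eq_abs, ← Complex.norm_real, ← Complex.norm_real t]
    exact_mod_cast Complex.exp_bound' hratio
  linarith [pow_div_factorial_le_exp_mul_sub (abs_nonneg t) m]

lemma abs_exp_sub_eval_expTaylor_le_half {t : ℝ} {m : ℕ} (h : 4 * |t| + 2 ≤ m) :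
    |exp t - (expTaylor m).eval t| ≤ exp t / 2 := by
  have hexponent : exp 1 * |t| - m ≤ t - 2 := by
    have : exp 1 * |t| ≤ 3 * |t| := by gcongr; exact exp_one_lt_three.le
    linarith [neg_abs_le t]
  have hfour : 4 ≤ exp 2 := by
    have : exp 2 = exp 1 * exp 1 := by rw [← exp_add, one_add_one_eq_two]
    nlinarith [add_one_le_exp (1 : ℝ)]
  calc |exp t - (expTaylor m).eval t| ≤ 2 * exp (exp 1 * |t| - m) :=
        abs_exp_sub_eval_expTaylor_le (by linarith [abs_nonneg t])
    _ ≤ 2 * exp (t - 2) := by gcongr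
    _ = 2 * exp t / exp 2 := by rw [exp_sub, mul_div_assoc]
    _ ≤ 2 * exp t / 4 := by gcongr
    _ = exp t / 2 := by ring

lemma half_exp_le_eval_expTaylor {t : ℝ} {m : ℕ} (h : 4 * |t| + 2 ≤ m) :
    exp t / 2 ≤ (expTaylor m).eval t := by
  linarith [(abs_le.1 (abs_exp_sub_eval_expTaylor_le_half h)).2]

lemma eval_expTaylor_le {t : ℝ} {m : ℕ} (h : 4 * |t| + 2 ≤ m) :
    (expTaylor m).eval t ≤ 3 / 2 * exp t := by
  linarith [(abs_le.1 (abs_exp_sub_eval_expTaylor_le_half h)).1]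

end ExpTaylor

section CompNegNormSq

open MvPolynomial
open scoped Polynomial

lemma totalDegree_aeval_le {σ R : Type*} [CommSemiring R] (p : R[X]) (q : MvPolynomial σ R) :
    (Polynomial.aeval q p).totalDegree ≤ p.natDegree * q.totalDegree := by
  rw [Polynomial.aeval_eq_sum_range]
  refine totalDegree_finsetSum_le fun i hi => ?_
  calc (p.coeff i • q ^ i).totalDegree ≤ (q ^ i).totalDegree := totalDegree_smul_le _ _
    _ ≤ i * q.totalDegree := totalDegree_pow _ _
    _ ≤ p.natDegree * q.totalDegree := by gcongr; exact Finset.mem_range_succ_iff.1 hi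

lemma totalDegree_psum_le (σ R : Type*) [Fintype σ] [CommSemiring R] (n : ℕ) :
    (psum σ R n).totalDegree ≤ n := by
  refine totalDegree_finsetSum_le fun i _ => ?_
  rw [X_pow_eq_monomial]
  exact (totalDegree_monomial_le _ _).trans (Finsupp.sum_single_index rfl).le

lemma pderiv_psum {σ R : Type*} [Fintype σ] [CommSemiring R] (n : ℕ) (j : σ) :
    pderiv j (psum σ R n) = (n : MvPolynomial σ R) * X j ^ (n - 1) := by
  classical
  simp [psum, pderiv_X, Pi.single_apply, Derivation.leibniz_pow]

/-- The radial polynomial `x ↦ p (-|x|²)` on `ℝ^k`, which turns approximants of `exp` into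
approximants of the Gaussian weight; the power sum `psum (Fin k) ℝ 2` stands for `|x|²`. -/
noncomputable def compNegNormSq (k : ℕ) (p : ℝ[X]) : MvPolynomial (Fin k) ℝ :=
  Polynomial.aeval (-psum (Fin k) ℝ 2) p

lemma totalDegree_compNegNormSq_le (k : ℕ) (p : ℝ[X]) :
    (compNegNormSq k p).totalDegree ≤ 2 * p.natDegree := by
  calc (compNegNormSq k p).totalDegree
      ≤ p.natDegree * (-psum (Fin k) ℝ 2).totalDegree := totalDegree_aeval_le _ _
    _ ≤ p.natDegree * 2 := by
      rw [totalDegree_neg]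
      gcongr
      exact totalDegree_psum_le _ _ 2
    _ = 2 * p.natDegree := mul_comm _ _

variable {k : ℕ}

lemma euclNorm_nonneg (x : Fin k → ℝ) : 0 ≤ euclNorm x := sqrt_nonneg _

lemma euclNorm_sq (x : Fin k → ℝ) : euclNorm x ^ 2 = ∑ j, x j ^ 2 :=
  sq_sqrt (Finset.sum_nonneg fun _ _ => sq_nonneg _)

lemma eval_compNegNormSq (p : ℝ[X]) (x : Fin k → ℝ) :
    eval x (compNegNormSq k p) = p.eval (-euclNorm x ^ 2) := by
  have hnorm : eval x (-psum (Fin k) ℝ 2) = -euclNorm x ^ 2 := by simp [psum, euclNorm_sq]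
  rw [compNegNormSq, ← hnorm]
  exact (Polynomial.aeval_algHom_apply (aeval x) (-psum (Fin k) ℝ 2) p).symm

lemma pderiv_compNegNormSq (p : ℝ[X]) (j : Fin k) :
    pderiv j (compNegNormSq k p) = -(2 * X j) * compNegNormSq k p.derivative := by
  rw [compNegNormSq, Derivation.map_aeval, map_neg, pderiv_psum, smul_eq_mul, compNegNormSq]
  push_cast
  ring

lemma gradNorm_compNegNormSq (p : ℝ[X]) (x : Fin k → ℝ) :
    gradNorm (compNegNormSq k p) x =
      2 * euclNorm x * |p.derivative.eval (-euclNorm x ^ 2)| := by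
  set c := p.derivative.eval (-euclNorm x ^ 2)
  have hsum : ∑ j, eval x (pderiv j (compNegNormSq k p)) ^ 2 = (2 * euclNorm x * |c|) ^ 2 := by
    calc ∑ j, eval x (pderiv j (compNegNormSq k p)) ^ 2 = ∑ j, (2 * c) ^ 2 * x j ^ 2 :=
          Finset.sum_congr rfl fun j _ => by
            rw [pderiv_compNegNormSq, map_mul, eval_compNegNormSq]
            simp only [map_neg, map_mul, map_ofNat, eval_X]
            ring
      _ = (2 * euclNorm x * |c|) ^ 2 := by
        rw [← Finset.mul_sum, ← euclNorm_sq, mul_pow, mul_pow, mul_pow, sq_abs]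
        ring
  rw [gradNorm, hsum, sqrt_sq]
  exact mul_nonneg (mul_nonneg zero_le_two (euclNorm_nonneg x)) (abs_nonneg c)

end CompNegNormSq

section GaussianApproximation

lemma totalDegree_compNegNormSq_expTaylor_succ_le (k m : ℕ) :
    (compNegNormSq k (expTaylor (m + 1))).totalDegree ≤ 2 * m :=
  (totalDegree_compNegNormSq_le k _).trans
    (Nat.mul_le_mul_left 2 (natDegree_expTaylor_succ_le m))

variable {k m : ℕ} {x : Fin k → ℝ}

lemma half_exp_le_eval_compNegNormSq_expTaylor (h : 4 * euclNorm x ^ 2 + 2 ≤ m) :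
    exp (-euclNorm x ^ 2) / 2 ≤ MvPolynomial.eval x (compNegNormSq k (expTaylor m)) := by
  rw [eval_compNegNormSq]
  exact half_exp_le_eval_expTaylor (by rwa [abs_neg, abs_sq])

lemma eval_compNegNormSq_expTaylor_le (h : 4 * euclNorm x ^ 2 + 2 ≤ m) :
    MvPolynomial.eval x (compNegNormSq k (expTaylor m)) ≤ 3 / 2 * exp (-euclNorm x ^ 2) := by
  rw [eval_compNegNormSq]
  exact eval_expTaylor_le (by rwa [abs_neg, abs_sq])

lemma gradNorm_compNegNormSq_expTaylor_succ_le (h : 4 * euclNorm x ^ 2 + 2 ≤ m) :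
    gradNorm (compNegNormSq k (expTaylor (m + 1))) x ≤
      3 * euclNorm x * exp (-euclNorm x ^ 2) := by
  have hlower := half_exp_le_eval_compNegNormSq_expTaylor h
  have hupper := eval_compNegNormSq_expTaylor_le h
  rw [eval_compNegNormSq] at hlower hupper
  rw [gradNorm_compNegNormSq, derivative_expTaylor_succ,
    abs_of_nonneg ((half_pos (exp_pos _)).le.trans hlower)]
  calc 2 * euclNorm x * (expTaylor m).eval (-euclNorm x ^ 2)
      ≤ 2 * euclNorm x * (3 / 2 * exp (-euclNorm x ^ 2)) :=
        mul_le_mul_of_nonneg_left hupper (mul_nonneg zero_le_two (euclNorm_nonneg x))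
    _ = 3 * euclNorm x * exp (-euclNorm x ^ 2) := by ring

lemma four_mul_euclNorm_sq_add_two_le {n : ℕ} {r : ℝ} (hn : 1 ≤ n)
    (hx : euclNorm x ≤ r * √((n : ℝ) / 2)) : 4 * euclNorm x ^ 2 + 2 ≤ (2 * r ^ 2 + 2) * n := by
  have hone : (1 : ℝ) ≤ n := mod_cast hn
  have hsq : euclNorm x ^ 2 ≤ r ^ 2 * (n / 2) := by
    calc euclNorm x ^ 2 ≤ (r * √(n / 2)) ^ 2 := by gcongr; exact euclNorm_nonneg x
      _ = r ^ 2 * (n / 2) := by rw [mul_pow, sq_sqrt (by positivity)]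
  linarith

end GaussianApproximation

theorem exists_polynomial_weight_approximant_general (r : ℝ) :
    ∃ C : ℝ, 0 < C ∧ ∀ k n : ℕ, 1 ≤ n →
      ∃ ρ : MvPolynomial (Fin k) ℝ,
        (ρ.totalDegree : ℝ) ≤ C * n ∧
        ∀ x : Fin k → ℝ, euclNorm x ≤ r * √((n : ℝ) / 2) →
          (C⁻¹ * exp (-(euclNorm x) ^ 2) ≤ MvPolynomial.eval x ρ ∧
            MvPolynomial.eval x ρ ≤ C * exp (-(euclNorm x) ^ 2)) ∧
          gradNorm ρ x ≤ C * √(n : ℝ) * exp (-(euclNorm x) ^ 2) := by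
  obtain ⟨d, hd⟩ := exists_nat_ge (2 * r ^ 2 + 2)
  have hd₂ : (2 : ℝ) ≤ d := by linarith [sq_nonneg r]
  refine ⟨2 * d, by linarith, fun k n hn =>
    ⟨compNegNormSq k (expTaylor (d * n + 1)), ?_, fun x hx => ?_⟩⟩
  · rw [mul_assoc]
    exact_mod_cast totalDegree_compNegNormSq_expTaylor_succ_le k (d * n)
  have hm : 4 * euclNorm x ^ 2 + 2 ≤ (d * n : ℕ) := by
    push_cast
    exact (four_mul_euclNorm_sq_add_two_le hn hx).trans (by gcongr)
  have hm_succ : 4 * euclNorm x ^ 2 + 2 ≤ (d * n + 1 : ℕ) := hm.trans (mod_cast Nat.le_succ _)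
  have hnorm : 3 * euclNorm x ≤ 2 * d * √n := by
    refine (abs_le_of_sq_le_sq' ?_ (by positivity)).2
    push_cast at hm
    rw [mul_pow, mul_pow, sq_sqrt (by positivity)]
    nlinarith [mul_le_mul_of_nonneg_right hd₂ (by positivity : (0 : ℝ) ≤ d * n)]
  refine ⟨⟨?_, ?_⟩, ?_⟩
  · refine le_trans ?_ (half_exp_le_eval_compNegNormSq_expTaylor hm_succ)
    rw [div_eq_inv_mul]
    gcongr
    linarith
  · refine (eval_compNegNormSq_expTaylor_le hm_succ).trans ?_
    gcongr
    linarith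
  · refine (gradNorm_compNegNormSq_expTaylor_succ_le hm).trans ?_
    gcongr

/-- Existence of polynomial approximants `ρ_n` to the weight `W_k(x) = exp(-|x|²)` in `ℝ^k`,
comparable to `W_k` on the ball of radius `2a_n` and with gradient bound `C√n W_k` on the
ball of radius `a_n`, where `a_n = √(n/2)`. -/
theorem exists_polynomial_weight_approximant :
    ∃ C : ℝ, 0 < C ∧ ∀ k n : ℕ, 1 ≤ k → 1 ≤ n →
      ∃ ρ : MvPolynomial (Fin k) ℝ,
        (ρ.totalDegree : ℝ) ≤ C * n ∧
        (∀ x : Fin k → ℝ, euclNorm x ≤ 2 * Real.sqrt ((n : ℝ) / 2) →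
          C⁻¹ * Real.exp (-(euclNorm x) ^ 2) ≤ MvPolynomial.eval x ρ ∧
          MvPolynomial.eval x ρ ≤ C * Real.exp (-(euclNorm x) ^ 2)) ∧
        (∀ x : Fin k → ℝ, euclNorm x ≤ Real.sqrt ((n : ℝ) / 2) →
          gradNorm ρ x ≤ C * Real.sqrt (n : ℝ) * Real.exp (-(euclNorm x) ^ 2)) := by
  obtain ⟨C, hC, h⟩ := exists_polynomial_weight_approximant_general 2
  refine ⟨C, hC, fun k n _ hn => (h k n hn).imp fun ρ hρ => ⟨hρ.1, fun x hx => (hρ.2 x hx).1,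
    fun x hx => (hρ.2 x (hx.trans ?_)).2⟩⟩
  linarith [sqrt_nonneg ((n : ℝ) / 2)]
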